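/- Let α ≥ 1 and let u be a bounded nonnegative function on a convex set Ω ⊂ ℝ^N with zero extension U. If there exists a single κ₀ > 0 with 0 ≤ κ₀U ≤ 1 such that x ↦ L_α(κ₀U(x)) is concave on ℝ^N, then for every κ ∈ (0,κ₀] the function x ↦ L_α(κU(x)) is concave on ℝ^N; that is, for α ≥ 1, weak α-logconcavity is equivalent to α-logconcavity. -/

import Mathlib

open MeasureTheory Real

/-- `L_α(s) = -(-log s)^{1/α}` for `s > 0`, and `-∞` for `s ≤ 0`, as an `EReal`-valued
function. -/
noncomputable def Lfun (α : ℝ) (s : ℝ) : EReal :=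
  if 0 < s then (((-((-Real.log s) ^ (1 / α))) : ℝ) : EReal) else ⊥

/-- Concavity of an `(ℝ ∪ {-∞})`-valued function on the whole space, with the conventions
`-∞ + a = -∞` and `-∞ ≥ -∞`. -/
def ERealConcaveOn {E : Type*} [AddCommGroup E] [Module ℝ E] (f : E → EReal) : Prop :=
  ∀ x y : E, ∀ μ : ℝ, 0 ≤ μ → μ ≤ 1 →
    ((1 - μ : ℝ) : EReal) * f x + (μ : EReal) * f y ≤ f ((1 - μ) • x + μ • y)

/-- The Gauss kernel `G(x,t) = (4πt)^{-N/2} exp(-|x|²/(4t))`. -/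
noncomputable def gauss (N : ℕ) (x : EuclideanSpace ℝ (Fin N)) (t : ℝ) : ℝ :=
  (4 * Real.pi * t) ^ (-(N : ℝ) / 2) * Real.exp (-‖x‖ ^ 2 / (4 * t))

/-- The heat semigroup `[e^{tΔ}u₀](x) = ∫ G(x-y,t) u₀(y) dy` on `ℝ^N`. -/
noncomputable def heatSol (N : ℕ) (u₀ : EuclideanSpace ℝ (Fin N) → ℝ) (t : ℝ)
    (x : EuclideanSpace ℝ (Fin N)) : ℝ :=
  ∫ y, gauss N (x - y) t * u₀ y

/-- `u` is `α`-logconcave in `ℝ^N`: for all sufficiently small `κ > 0`, the function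
`x ↦ L_α(κ u(x))` is concave as an `(ℝ ∪ {-∞})`-valued function. -/
def AlphaLogConcave {N : ℕ} (α : ℝ) (u : EuclideanSpace ℝ (Fin N) → ℝ) : Prop :=
  ∃ κ₀ : ℝ, 0 < κ₀ ∧ ∀ κ : ℝ, 0 < κ → κ ≤ κ₀ →
    ERealConcaveOn (fun x => Lfun α (κ * u x))

/-- `F : [0,1] → ℝ ∪ {-∞}` is admissible: strictly increasing and continuous on `(0,1]`,
`F(0) = -∞`, and `F(s) ≠ -∞` for `s ∈ (0,1]`. -/
def Admissible (F : ℝ → EReal) : Prop :=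
  StrictMonoOn F (Set.Ioc (0 : ℝ) 1) ∧ ContinuousOn F (Set.Ioc (0 : ℝ) 1) ∧
    F 0 = ⊥ ∧ ∀ s : ℝ, 0 < s → s ≤ 1 → F s ≠ ⊥

/-- `u` is `F`-concave in `ℝ^N`: for all sufficiently small `κ > 0`, one has
`0 ≤ κ u ≤ 1` and `x ↦ F(κ u(x))` is concave as an `(ℝ ∪ {-∞})`-valued function. -/
def FConcave {N : ℕ} (F : ℝ → EReal) (u : EuclideanSpace ℝ (Fin N) → ℝ) : Prop :=
  ∃ κ₀ : ℝ, 0 < κ₀ ∧ ∀ κ : ℝ, 0 < κ → κ ≤ κ₀ →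
    (∀ x, 0 ≤ κ * u x ∧ κ * u x ≤ 1) ∧
    ∀ x y : EuclideanSpace ℝ (Fin N), ∀ μ : ℝ, 0 ≤ μ → μ ≤ 1 →
      ((1 - μ : ℝ) : EReal) * F (κ * u x) + (μ : EReal) * F (κ * u y) ≤
        F (κ * u ((1 - μ) • x + μ • y))

/-- The zero extension of a function `u` on `Ω` to all of `ℝ^N`. -/
noncomputable def zeroExt {N : ℕ} (Ω : Set (EuclideanSpace ℝ (Fin N)))
    (u : EuclideanSpace ℝ (Fin N) → ℝ) : EuclideanSpace ℝ (Fin N) → ℝ :=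
  Ω.indicator u

/-- Concavity of an `(ℝ ∪ {-∞})`-valued function on a convex set `Ω`. -/
def ERealConcaveOnSet {E : Type*} [AddCommGroup E] [Module ℝ E]
    (Ω : Set E) (f : E → EReal) : Prop :=
  ∀ x ∈ Ω, ∀ y ∈ Ω, ∀ μ : ℝ, 0 ≤ μ → μ ≤ 1 →
    ((1 - μ : ℝ) : EReal) * f x + (μ : EReal) * f y ≤ f ((1 - μ) • x + μ • y)

/-!
Passing from `κ₀` to `κ ≤ κ₀` adds the nonnegative constant `d = log (κ₀ / κ)` to `-log (κ₀ U)`.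
With `f = (-log (κ₀ U)) ^ (1 / α)`, which is convex where `U` is positive, this replaces `f` by
`(f ^ α + d) ^ (1 / α)`, the `ℓ^α` norm of the pair `(f, d ^ (1 / α))`. For `α ≥ 1` Minkowski's
inequality shows that this function is convex too.
-/

section LpNorm

variable {ι E : Type*} [AddCommGroup E] [Module ℝ E] {s : Set E} {p : ℝ}

lemma rpow_sum_const_mul_rpow {t : Finset ι} {v : ι → ℝ} {a : ℝ} (hp : p ≠ 0) (ha : 0 ≤ a)
    (hv : ∀ i ∈ t, 0 ≤ v i) :
    (∑ i ∈ t, (a * v i) ^ p) ^ (1 / p) = a * (∑ i ∈ t, v i ^ p) ^ (1 / p) := by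
  have hsum : ∑ i ∈ t, (a * v i) ^ p = a ^ p * ∑ i ∈ t, v i ^ p := by
    rw [Finset.mul_sum]
    exact Finset.sum_congr rfl fun i hi => mul_rpow ha (hv i hi)
  rw [hsum, mul_rpow (rpow_nonneg ha p) (Finset.sum_nonneg fun i hi => rpow_nonneg (hv i hi) p),
    one_div, rpow_rpow_inv ha hp]

lemma convexOn_rpow_sum_rpow {t : Finset ι} {f : ι → E → ℝ} (hp : 1 ≤ p) (hs : Convex ℝ s)
    (hf : ∀ i ∈ t, ConvexOn ℝ s (f i)) (hf₀ : ∀ i ∈ t, ∀ x ∈ s, 0 ≤ f i x) :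
    ConvexOn ℝ s fun x => (∑ i ∈ t, f i x ^ p) ^ (1 / p) := by
  refine ⟨hs, fun x hx y hy a b ha hb hab => ?_⟩
  have hp₀ : 0 < p := zero_lt_one.trans_le hp
  have hz : a • x + b • y ∈ s := hs hx hy ha hb hab
  calc (∑ i ∈ t, f i (a • x + b • y) ^ p) ^ (1 / p)
      ≤ (∑ i ∈ t, (a * f i x + b * f i y) ^ p) ^ (1 / p) := by
        refine rpow_le_rpow (Finset.sum_nonneg fun i hi => rpow_nonneg (hf₀ i hi _ hz) p)
          (Finset.sum_le_sum fun i hi => ?_) (by positivity)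
        exact rpow_le_rpow (hf₀ i hi _ hz) ((hf i hi).2 hx hy ha hb hab) hp₀.le
    _ ≤ (∑ i ∈ t, (a * f i x) ^ p) ^ (1 / p) + (∑ i ∈ t, (b * f i y) ^ p) ^ (1 / p) :=
        Lp_add_le_of_nonneg t hp (fun i hi => mul_nonneg ha (hf₀ i hi x hx))
          fun i hi => mul_nonneg hb (hf₀ i hi y hy)
    _ = a • (∑ i ∈ t, f i x ^ p) ^ (1 / p) + b • (∑ i ∈ t, f i y ^ p) ^ (1 / p) := by
        rw [rpow_sum_const_mul_rpow hp₀.ne' ha fun i hi => hf₀ i hi x hx,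
          rpow_sum_const_mul_rpow hp₀.ne' hb fun i hi => hf₀ i hi y hy, smul_eq_mul, smul_eq_mul]

lemma convexOn_rpow_add_const_rpow {f : E → ℝ} {d : ℝ} (hp : 1 ≤ p) (hf : ConvexOn ℝ s f)
    (hf₀ : ∀ x ∈ s, 0 ≤ f x) (hd : 0 ≤ d) :
    ConvexOn ℝ s fun x => (f x ^ p + d) ^ (1 / p) := by
  have h := convexOn_rpow_sum_rpow (t := Finset.univ) (f := ![f, fun _ => d ^ p⁻¹]) hp hf.1
    (by simpa [Fin.forall_fin_two] using ⟨hf, convexOn_const _ hf.1⟩)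
    (by simpa [Fin.forall_fin_two] using ⟨hf₀, fun _ _ => rpow_nonneg hd p⁻¹⟩)
  simpa [Fin.sum_univ_two, rpow_inv_rpow hd (zero_lt_one.trans_le hp).ne'] using h

end LpNorm

section Concavity

variable {E : Type*} [AddCommGroup E] [Module ℝ E] {α : ℝ} {U : E → ℝ}

lemma erealConcaveOn_iff_concaveOn_toReal {f : E → EReal} (hf : ∀ x, f x ≠ ⊤) :
    ERealConcaveOn f ↔ ConcaveOn ℝ {x | f x ≠ ⊥} fun x => (f x).toReal := by
  have combo_eq {x y : E} (hx : f x ≠ ⊥) (hy : f y ≠ ⊥) (a b : ℝ) :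
      (a : EReal) * f x + (b : EReal) * f y = ↑(a * (f x).toReal + b * (f y).toReal) := by
    rw [EReal.coe_add, EReal.coe_mul, EReal.coe_mul, EReal.coe_toReal (hf x) hx,
      EReal.coe_toReal (hf y) hy]
  constructor
  · intro h
    have combo_le {x y : E} (hx : f x ≠ ⊥) (hy : f y ≠ ⊥) {a b : ℝ} (ha : 0 ≤ a) (hb : 0 ≤ b)
        (hab : a + b = 1) : ↑(a * (f x).toReal + b * (f y).toReal) ≤ f (a • x + b • y) := by
      obtain rfl : a = 1 - b := by linarith
      exact combo_eq hx hy _ _ ▸ h x y b hb (by linarith)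
    have hconv : Convex ℝ {x | f x ≠ ⊥} := fun x hx y hy a b ha hb hab =>
      ((EReal.bot_lt_coe _).trans_le (combo_le hx hy ha hb hab)).ne'
    refine ⟨hconv, fun x hx y hy a b ha hb hab => ?_⟩
    exact EReal.coe_le_coe_iff.1 <|
      (combo_le hx hy ha hb hab).trans_eq (EReal.coe_toReal (hf _) (hconv hx hy ha hb hab)).symm
  · intro h x y μ hμ₀ hμ₁
    rcases hμ₀.eq_or_lt with rfl | hμ_pos
    · simp
    rcases hμ₁.eq_or_lt with rfl | hμ_lt
    · simp
    by_cases hx : f x = ⊥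
    · rw [hx, EReal.coe_mul_bot_of_pos (sub_pos.2 hμ_lt), EReal.bot_add]
      exact bot_le
    by_cases hy : f y = ⊥
    · rw [hy, EReal.coe_mul_bot_of_pos hμ_pos, EReal.add_bot]
      exact bot_le
    have hμ_sub : 0 ≤ 1 - μ := sub_nonneg.2 hμ₁
    rw [combo_eq hx hy, ← EReal.coe_toReal (hf _) (h.1 hx hy hμ_sub hμ₀ (by ring))]
    exact EReal.coe_le_coe_iff.2 (h.2 hx hy hμ_sub hμ₀ (by ring))

lemma Lfun_of_pos {r : ℝ} (hr : 0 < r) : Lfun α r = ↑(-(-log r) ^ (1 / α)) :=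
  if_pos hr

lemma Lfun_ne_top (r : ℝ) : Lfun α r ≠ ⊤ := by
  unfold Lfun
  split_ifs
  exacts [EReal.coe_ne_top _, bot_ne_top]

lemma Lfun_ne_bot_iff {r : ℝ} : Lfun α r ≠ ⊥ ↔ 0 < r := by
  unfold Lfun
  split_ifs with hr <;> simp only [hr, ne_eq, EReal.coe_ne_bot, not_true, not_false_eq_true]

lemma erealConcaveOn_Lfun_iff_convexOn :
    ERealConcaveOn (fun x => Lfun α (U x)) ↔
      ConvexOn ℝ {x | 0 < U x} fun x => (-log (U x)) ^ (1 / α) := by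
  have toReal_eq : Set.EqOn (fun x => (Lfun α (U x)).toReal)
      (-fun x => (-log (U x)) ^ (1 / α)) {x | 0 < U x} := fun x hx => by
    simp only [Lfun_of_pos hx, EReal.toReal_coe, Pi.neg_apply]
  rw [erealConcaveOn_iff_concaveOn_toReal fun x => Lfun_ne_top (U x), ← neg_concaveOn_iff]
  simp only [Lfun_ne_bot_iff]
  exact ⟨fun h => h.congr toReal_eq, fun h => h.congr toReal_eq.symm⟩

lemma neg_log_mul_eq_add_log_div {κ κ₀ r : ℝ} (hκ : κ ≠ 0) (hκ₀ : κ₀ ≠ 0) (hr : r ≠ 0) :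
    -log (κ * r) = -log (κ₀ * r) + log (κ₀ / κ) := by
  rw [log_mul hκ hr, log_mul hκ₀ hr, log_div hκ₀ hκ]
  ring

theorem weak_alpha_logconcave_iff_alpha_logconcave_general {κ κ₀ : ℝ} (hα : 1 ≤ α)
    (hU : ∀ x, κ₀ * U x ≤ 1) (hconc : ERealConcaveOn fun x => Lfun α (κ₀ * U x))
    (hκ : 0 < κ) (hle : κ ≤ κ₀) :
    ERealConcaveOn fun x => Lfun α (κ * U x) := by
  have hκ₀ : 0 < κ₀ := hκ.trans_le hle
  rw [erealConcaveOn_Lfun_iff_convexOn] at hconc ⊢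
  simp only [mul_pos_iff_of_pos_left hκ, mul_pos_iff_of_pos_left hκ₀] at hconc ⊢
  have neg_log_nonneg : ∀ x ∈ {x | 0 < U x}, 0 ≤ -log (κ₀ * U x) := fun x hx =>
    neg_nonneg.2 (log_nonpos (mul_pos hκ₀ hx).le (hU x))
  have hd : 0 ≤ log (κ₀ / κ) := log_nonneg ((one_le_div hκ).2 hle)
  refine (convexOn_rpow_add_const_rpow hα hconc
    (fun x hx => rpow_nonneg (neg_log_nonneg x hx) _) hd).congr fun x hx => ?_
  simp only [one_div, rpow_inv_rpow (neg_log_nonneg x hx) (zero_lt_one.trans_le hα).ne',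
    neg_log_mul_eq_add_log_div hκ.ne' hκ₀.ne' (ne_of_gt hx)]

end Concavity

/-- Remark 2.1 (i): For `α ≥ 1`, weak `α`-logconcavity implies (and hence is
equivalent to) `α`-logconcavity: if `L_α(κ₀ U)` is concave for a single `κ₀ > 0` with
`0 ≤ κ₀ U ≤ 1`, then `L_α(κ U)` is concave for every `κ ∈ (0, κ₀]`. -/
theorem weak_alpha_logconcave_iff_alpha_logconcave
    (N : ℕ) (α : ℝ) (hα : 1 ≤ α)
    (Ω : Set (EuclideanSpace ℝ (Fin N))) (hΩ : Convex ℝ Ω)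
    (u : EuclideanSpace ℝ (Fin N) → ℝ)
    (h0 : ∀ x ∈ Ω, 0 ≤ u x) (hbd : ∃ M : ℝ, ∀ x ∈ Ω, u x ≤ M)
    (κ₀ : ℝ) (hκ₀ : 0 < κ₀)
    (hrange : ∀ x, 0 ≤ κ₀ * zeroExt Ω u x ∧ κ₀ * zeroExt Ω u x ≤ 1)
    (hconc : ERealConcaveOn (fun x => Lfun α (κ₀ * zeroExt Ω u x))) :
    ∀ κ : ℝ, 0 < κ → κ ≤ κ₀ →
      ERealConcaveOn (fun x => Lfun α (κ * zeroExt Ω u x)) :=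
  fun _ hκ hle => weak_alpha_logconcave_iff_alpha_logconcave_general hα
    (fun x => (hrange x).2) hconc hκ hle
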